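/- Let m ≥ k ≥ 1 be integers and let H be a finite connected graph with c(H) ≤ k. Then c(Z_{k,m}(H)) ≤ k: k cops have a winning strategy on Z_{k,m}(H), obtained by first catching the robber's projection onto H (the nearest vertex of H to the robber) and then having one cop catch the robber on the path or arm on which it is trapped. -/

import Mathlib

open SimpleGraph

/-! ### Pursuit games on graphs

A round of the game is recorded as a pair `(c, r)` where `c : Fin k → V` is the
configuration of the `k` pursuers (cops or zombies) and `r : V` the position of the
evader (robber or survivor).  In a round the pursuers move first (knowing the full
history), then the evader moves (knowing the full history and the pursuers' new
configuration).  Strategies are functions of the full history, so no generality is lost. -/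

/-- The history of a play: the list of (pursuer configuration, evader position) pairs
for the completed rounds so far. -/
abbrev GameHist (V : Type*) (k : ℕ) := List ((Fin k → V) × V)

/-- The history determined by the sequences `c` (pursuer configurations) and `r`
(evader positions), recording rounds `0, …, n-1`. -/
def histUpTo {V : Type*} {k : ℕ} (c : ℕ → Fin k → V) (r : ℕ → V) (n : ℕ) : GameHist V k :=
  (List.range n).map fun i => (c i, r i)

/-- The robber/survivor always moves along an edge or stays still. -/
def RobberLegal {V : Type*} (G : SimpleGraph V) (r : ℕ → V) : Prop :=
  ∀ n, r (n+1) = r n ∨ G.Adj (r n) (r (n+1))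

/-- At step `n`, each cop stays still or moves along an edge. -/
def CopStepLegal {V : Type*} (G : SimpleGraph V) {k : ℕ} (c : ℕ → Fin k → V) (n : ℕ) : Prop :=
  ∀ i, c (n+1) i = c n i ∨ G.Adj (c n i) (c (n+1) i)

/-- At step `n`, each zombie moves along an edge to a vertex strictly closer to the
survivor's current position `r n`. -/
def ZombieStepLegal {V : Type*} (G : SimpleGraph V) {k : ℕ} (c : ℕ → Fin k → V) (r : ℕ → V)
    (n : ℕ) : Prop :=
  ∀ i, G.Adj (c n i) (c (n+1) i) ∧ G.dist (c (n+1) i) (r n) < G.dist (c n i) (r n)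

/-- The pursuers follow the history-dependent strategy `mv`: their configuration at time
`n+1` is the strategy applied to the history of rounds `0, …, n`. -/
def FollowsStrat {V : Type*} {k : ℕ} (mv : GameHist V k → Fin k → V)
    (c : ℕ → Fin k → V) (r : ℕ → V) : Prop :=
  ∀ n, c (n+1) = mv (histUpTo c r (n+1))

/-- Starting from the cop configuration `cpos` (the robber then chooses any starting
vertex, and the cops move first), the cops have a strategy catching the robber: in every
play consistent with the strategy there is a time at which some cop and the robber occupy
the same vertex, all cop moves made up to and including the capturing move being legal. -/
def CopsCatchFrom {V : Type*} (G : SimpleGraph V) {k : ℕ} (cpos : Fin k → V) : Prop :=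
  ∃ mv : GameHist V k → Fin k → V,
    ∀ (c : ℕ → Fin k → V) (r : ℕ → V),
      c 0 = cpos → FollowsStrat mv c r → RobberLegal G r →
      ∃ n, ((∃ i, c n i = r n) ∧ ∀ m < n, CopStepLegal G c m) ∨
           ((∃ i, c (n+1) i = r n) ∧ ∀ m ≤ n, CopStepLegal G c m)

/-- `k` cops have a winning strategy on `G`. -/
def CopsWinWith {V : Type*} (G : SimpleGraph V) (k : ℕ) : Prop :=
  ∃ cpos : Fin k → V, CopsCatchFrom G cpos

/-- The cop number of `G`: the least `k` such that `k` cops have a winning strategy. -/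
noncomputable def copNumber {V : Type*} (G : SimpleGraph V) : ℕ :=
  sInf {k | CopsWinWith G k}

/-- Starting from the zombie configuration `zpos` and survivor position `spos`, with the
zombies to move, the zombies have a strategy catching the survivor: in every play
consistent with the strategy there is a time at which some zombie and the survivor occupy
the same vertex, all zombie moves made up to and including the capturing move being legal
(each zombie moves along an edge, strictly decreasing its distance to the survivor). -/
def ZombiesCatchFrom {V : Type*} (G : SimpleGraph V) {k : ℕ} (zpos : Fin k → V) (spos : V) :
    Prop :=
  ∃ mv : GameHist V k → Fin k → V,
    ∀ (c : ℕ → Fin k → V) (r : ℕ → V),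
      c 0 = zpos → r 0 = spos → FollowsStrat mv c r → RobberLegal G r →
      ∃ n, ((∃ i, c n i = r n) ∧ ∀ m < n, ZombieStepLegal G c r m) ∨
           ((∃ i, c (n+1) i = r n) ∧ ∀ m ≤ n, ZombieStepLegal G c r m)

/-- `k` zombies have a winning strategy on `G`: they can choose starting vertices so that
wherever the survivor starts, they catch the survivor. -/
def ZombiesWinWith {V : Type*} (G : SimpleGraph V) (k : ℕ) : Prop :=
  ∃ zpos : Fin k → V, ∀ spos : V, ZombiesCatchFrom G zpos spos

/-- The zombie number of `G`: the least `k` such that `k` zombies have a winning strategy. -/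
noncomputable def zombieNumber {V : Type*} (G : SimpleGraph V) : ℕ :=
  sInf {k | ZombiesWinWith G k}

/-- Starting from the zombie configuration `zpos` and survivor position `spos`, with the
zombies to move, the survivor has a strategy evading capture forever: in every play where
the survivor follows the strategy and the zombies move legally, the survivor's moves are
legal and no zombie ever occupies the survivor's vertex. -/
def SurvivorEvadesFrom {V : Type*} (G : SimpleGraph V) {k : ℕ} (zpos : Fin k → V) (spos : V) :
    Prop :=
  ∃ mv : GameHist V k → (Fin k → V) → V,
    ∀ (c : ℕ → Fin k → V) (r : ℕ → V),
      c 0 = zpos → r 0 = spos →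
      (∀ n, r (n+1) = mv (histUpTo c r (n+1)) (c (n+1))) →
      (∀ n, ZombieStepLegal G c r n) →
      RobberLegal G r ∧ ∀ n, (∀ i, c n i ≠ r n) ∧ (∀ i, c (n+1) i ≠ r n)

/-- Zombie-move legality in the variant where in each round the survivor moves first:
at step `n` each zombie moves along an edge, strictly decreasing its distance to the
survivor's current position `r (n+1)`. -/
def ZombieStepLegalAfter {V : Type*} (G : SimpleGraph V) {k : ℕ} (c : ℕ → Fin k → V)
    (r : ℕ → V) (n : ℕ) : Prop :=
  ∀ i, G.Adj (c n i) (c (n+1) i) ∧ G.dist (c (n+1) i) (r (n+1)) < G.dist (c n i) (r (n+1))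

/-- Starting from the zombie configuration `zpos` and survivor position `spos`, with the
survivor to move (the zombies then responding each round), the zombies have a strategy
catching the survivor. -/
def ZombiesCatchFromSurvivorToMove {V : Type*} (G : SimpleGraph V) {k : ℕ}
    (zpos : Fin k → V) (spos : V) : Prop :=
  ∃ mv : GameHist V k → V → Fin k → V,
    ∀ (c : ℕ → Fin k → V) (r : ℕ → V),
      c 0 = zpos → r 0 = spos →
      (∀ n, c (n+1) = mv (histUpTo c r (n+1)) (r (n+1))) →
      RobberLegal G r →
      ∃ n, (∃ i, c 0 i = r 0) ∨
           ((∃ i, c n i = r (n+1)) ∧ ∀ m < n, ZombieStepLegalAfter G c r m) ∨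
           ((∃ i, c (n+1) i = r (n+1)) ∧ ∀ m ≤ n, ZombieStepLegalAfter G c r m)

/-! ### The graphs `T_x`, the arm graphs `A_n`, and attaching an arm to a graph -/

/-- `|i - j| = 1 or 4` for `i j : Fin 5`, i.e. `i` and `j` are cyclically consecutive. -/
def fin5adj (i j : Fin 5) : Prop :=
  ((i : ℕ) + 1) % 5 = (j : ℕ) ∨ ((j : ℕ) + 1) % 5 = (i : ℕ)

/-- The vertices of the arm graph `A_n`: the vertex `b₂⁻¹` (`start`), the vertex `b₀ⁿ`
(`finish`), and for each copy `T_x` (`x : Fin n`) the inside vertices `a_i^x`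
(`inner x i`), the outside vertices `b_i^x` (`outer x i`) and the center `c^x`
(`center x`). -/
inductive ArmVert (n : ℕ) : Type
  | start : ArmVert n
  | finish : ArmVert n
  | inner : Fin n → Fin 5 → ArmVert n
  | outer : Fin n → Fin 5 → ArmVert n
  | center : Fin n → ArmVert n
  deriving DecidableEq

/-- One direction of the edge relation of the arm graph `A_n`. -/
def armRel (n : ℕ) : ArmVert n → ArmVert n → Prop
  | .inner x i, .inner y j => x = y ∧ fin5adj i j
  | .outer x i, .outer y j => (x = y ∧ fin5adj i j) ∨ ((x : ℕ) + 1 = (y : ℕ) ∧ (i : ℕ) = 2 ∧ (j : ℕ) = 0)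
  | .inner x i, .outer y j => x = y ∧ (i = j ∨ fin5adj i j)
  | .inner x _, .center y => x = y
  | .start, .outer y j => (y : ℕ) = 0 ∧ (j : ℕ) = 0
  | .outer x i, .finish => (x : ℕ) + 1 = n ∧ (i : ℕ) = 2
  | .start, .finish => n = 0
  | _, _ => False

/-- The arm graph `A_n`. -/
def armGraph (n : ℕ) : SimpleGraph (ArmVert n) := SimpleGraph.fromRel (armRel n)

/-- The index of the copy `T_x` containing a vertex of `A_n` (if any). -/
def copyIdx {n : ℕ} : ArmVert n → Option (Fin n)
  | .inner x _ => some x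
  | .outer x _ => some x
  | .center x => some x
  | _ => none

/-- The vertex `b₀ˣ` of `A_n` (for `x = n` this is the final vertex `b₀ⁿ`). -/
def b0 (n x : ℕ) : ArmVert n :=
  if h : x < n then ArmVert.outer ⟨x, h⟩ 0 else ArmVert.finish

/-- The vertex `b₂^{x-1}` of `A_n` (for `x = 0` this is the vertex `b₂⁻¹`). -/
def b2prev (n x : ℕ) : ArmVert n :=
  if h : 1 ≤ x ∧ x - 1 < n then ArmVert.outer ⟨x - 1, h.2⟩ 2 else ArmVert.start

/-- The vertex lies in the copy `T_x`. -/
def InCopy {W : Type*} {n : ℕ} (x : ℕ) (u : W ⊕ ArmVert n) : Prop :=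
  ∃ (a : ArmVert n) (y : Fin n), u = Sum.inr a ∧ copyIdx a = some y ∧ (y : ℕ) = x

/-- One direction of the edge relation of the graph obtained from a graph `H` and the
arm `A_n` by adding an edge from the vertex `b₂⁻¹` of `A_n` to the vertex `v` of `H`. -/
def combRel {W : Type*} (H : SimpleGraph W) (v : W) (n : ℕ) :
    (W ⊕ ArmVert n) → (W ⊕ ArmVert n) → Prop
  | Sum.inl w, Sum.inl w' => H.Adj w w'
  | Sum.inr a, Sum.inr a' => (armGraph n).Adj a a'
  | Sum.inl w, Sum.inr a => w = v ∧ a = ArmVert.start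
  | _, _ => False

/-- The graph obtained from `H` and the arm `A_n` by adding an edge from the vertex
`b₂⁻¹` of `A_n` to the vertex `v` of `H`. -/
def combGraph {W : Type*} (H : SimpleGraph W) (v : W) (n : ℕ) :
    SimpleGraph (W ⊕ ArmVert n) :=
  SimpleGraph.fromRel (combRel H v n)

/-! ### The graphs `Z_{k,m}(H)` -/

/-- The vertices of `Z_{k,m}(H)` where `H` has vertex type `W` and `p = 4*(m-k)`:
the vertices of `H`, for each vertex of `H` a path on `p` vertices, and for each
vertex of `H` `m` copies of the arm graph `A_p`. -/
abbrev ZVert (W : Type*) (m p : ℕ) : Type _ := W ⊕ (W × Fin p) ⊕ (W × Fin m × ArmVert p)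

/-- One direction of the edge relation of `Z_{k,m}(H)`. -/
def zRel {W : Type*} (H : SimpleGraph W) (m p : ℕ) : ZVert W m p → ZVert W m p → Prop
  | Sum.inl w, Sum.inl w' => H.Adj w w'
  | Sum.inl w, Sum.inr (Sum.inl (w', j)) => w = w' ∧ (j : ℕ) = 0
  | Sum.inr (Sum.inl (w, j)), Sum.inr (Sum.inl (w', j')) => w = w' ∧ (j : ℕ) + 1 = (j' : ℕ)
  | Sum.inl w, Sum.inr (Sum.inr (w', _, a)) => w = w' ∧ a = ArmVert.start
  | Sum.inr (Sum.inr (w, i, a)), Sum.inr (Sum.inr (w', i', a')) =>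
      w = w' ∧ i = i' ∧ (armGraph p).Adj a a'
  | _, _ => False

/-- The graph `Z_{k,m}(H)`: to each vertex `v` of `H` we attach (by an edge from `v` to
the first path vertex, resp. to `b₂⁻¹`) one path on `4*(m-k)` vertices and `m` copies of
the arm graph `A_{4*(m-k)}`. -/
def ZGraph {W : Type*} (H : SimpleGraph W) (k m : ℕ) :
    SimpleGraph (ZVert W m (4 * (m - k))) :=
  SimpleGraph.fromRel (zRel H m (4 * (m - k)))

/-! ### Hypercubes and block intersection graphs -/

/-- The `n`-dimensional hypercube: vertices are `Fin n → Bool`, two vertices being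
adjacent exactly when they differ in exactly one coordinate. -/
def hypercube (n : ℕ) : SimpleGraph (Fin n → Bool) :=
  SimpleGraph.fromRel fun x y => ∃ i, x i ≠ y i ∧ ∀ j, j ≠ i → x j = y j

/-- `(P, B)` is a balanced incomplete block design with parameters `(v, k, 1)`:
`P` has `v` points, every block has `k` points, and every pair of distinct points lies
in exactly one block. -/
def IsBIBD (P : Type*) (B : Finset (Finset P)) (v k : ℕ) : Prop :=
  Nat.card P = v ∧ (∀ b ∈ B, b.card = k) ∧
    ∀ p q : P, p ≠ q → ∃! b : Finset P, b ∈ B ∧ p ∈ b ∧ q ∈ b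

/-- The block intersection graph of a collection `B` of blocks: vertices are the blocks,
two distinct blocks being adjacent exactly when they intersect. -/
def blockGraph {P : Type*} (B : Finset (Finset P)) : SimpleGraph {b // b ∈ B} :=
  SimpleGraph.fromRel fun b b' => ∃ p, p ∈ b.val ∧ p ∈ b'.val

/-! ### Zombie-good positions on a graph with an attached arm -/

/-- A position (with the zombies to move) in the game on the graph obtained by attaching
the arm `A_n` to `H` at `v` is `x`-zombie-good if: the survivor is in some `T_y` with
`y ≥ x` or at `b₀ⁿ`; for some `i ≥ 1` the zombies `z_1, …, z_i` are all at `b₀ˣ`; the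
remaining zombies are in `H ∪ {b₂⁻¹} ∪ T_0 ∪ ⋯ ∪ T_{x-1}`; consecutive zombie distances
to the survivor satisfy `0 ≤ d_{j+1} - d_j ≤ 4`; and `d_m - d_1 ≥ n - x`. -/
def ZombieGood {W : Type*} (H : SimpleGraph W) (v : W) (n m x : ℕ)
    (zpos : Fin m → (W ⊕ ArmVert n)) (spos : W ⊕ ArmVert n) : Prop :=
  (∃ a : ArmVert n, spos = Sum.inr a ∧
      ((∃ y : Fin n, copyIdx a = some y ∧ x ≤ (y : ℕ)) ∨ a = ArmVert.finish)) ∧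
  (∃ i : ℕ, 1 ≤ i ∧ i ≤ m ∧
      (∀ j : Fin m, (j : ℕ) < i → zpos j = Sum.inr (b0 n x)) ∧
      (∀ j : Fin m, i ≤ (j : ℕ) →
        (∃ w, zpos j = Sum.inl w) ∨ zpos j = Sum.inr ArmVert.start ∨
          (∃ (a : ArmVert n) (y : Fin n), zpos j = Sum.inr a ∧ copyIdx a = some y ∧ (y : ℕ) < x))) ∧
  (∀ j : Fin m, ∀ h : (j : ℕ) + 1 < m,
      (combGraph H v n).dist spos (zpos j) ≤ (combGraph H v n).dist spos (zpos ⟨(j : ℕ) + 1, h⟩) ∧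
      (combGraph H v n).dist spos (zpos ⟨(j : ℕ) + 1, h⟩) - (combGraph H v n).dist spos (zpos j) ≤ 4) ∧
  (∀ hm : 1 ≤ m,
      n - x ≤ (combGraph H v n).dist spos (zpos ⟨m - 1, by omega⟩) -
        (combGraph H v n).dist spos (zpos ⟨0, by omega⟩))

/-! Folding the far end of an arm onto its predecessors, one layer at a time, dismantles
`Z_{k,m}(H)` down to `H`.  Whenever a folding moves each vertex to one that dominates it, cops who
can catch the image of the robber can catch the robber: once a cop stands on the image, the robber
cannot leave the closed neighbourhood of that cop.  Hence `k` cops who win on `H` win on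
`Z_{k,m}(H)`. -/

section Game

variable {V V' ι κ : Type*} {G : SimpleGraph V} {G' : SimpleGraph V'} {S S' : Set V}

/-- `y` lies in the closed neighbourhood of `x`: a player on `x` may move to `y` or stay there.
The disjuncts are oriented so that `RobberLegal` and `CopStepLegal` unfold to `Near`. -/
def Near (G : SimpleGraph V) (x y : V) : Prop := y = x ∨ G.Adj x y

instance [DecidableEq V] [DecidableRel G.Adj] : DecidableRel (Near G) :=
  fun x y => inferInstanceAs (Decidable (y = x ∨ G.Adj x y))

theorem Near.refl (G : SimpleGraph V) (x : V) : Near G x x := Or.inl rfl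

theorem Near.symm {x y : V} (h : Near G x y) : Near G y x := h.imp Eq.symm Adj.symm

theorem near_comm {x y : V} : Near G x y ↔ Near G y x := ⟨Near.symm, Near.symm⟩

theorem near_fromRel {R : V → V → Prop} {x y : V} :
    Near (SimpleGraph.fromRel R) x y ↔ y = x ∨ R x y ∨ R y x := by
  rw [Near, fromRel_adj]
  tauto

theorem near_map_iff (φ : G ↪g G') {x y : V} : Near G' (φ x) (φ y) ↔ Near G x y := by
  rw [Near, Near, φ.injective.eq_iff, φ.map_adj_iff]

theorem near_update [DecidableEq ι] {c : ι → V} {i : ι} {v : V} (h : Near G (c i) v) (j : ι) :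
    Near G (c j) (Function.update c i v j) := by
  rcases eq_or_ne j i with rfl | hj
  · rwa [Function.update_self]
  · rw [Function.update_of_ne hj]
    exact Near.refl G _

/-- The positional game in which the robber must move into `S`: `CopsWinOn G S c r` says that cops
at `c`, with the cops to move, can force the capture of a robber at `r`.  The well-foundedness of
the inductive predicate encodes that the capture takes place after finitely many rounds. -/
inductive CopsWinOn (G : SimpleGraph V) (S : Set V) : (ι → V) → V → Prop
  | caught {c : ι → V} {r : V} (i : ι) (h : Near G (c i) r) : CopsWinOn G S c r
  | step {c : ι → V} {r : V} (c' : ι → V) (hc : ∀ i, Near G (c i) (c' i))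
      (h : ∀ r' ∈ S, Near G r r' → CopsWinOn G S c' r') : CopsWinOn G S c r

namespace CopsWinOn

theorem extend_cops {e : ι → κ} (he : Function.Injective e) {c : ι → V} {r : V}
    (h : CopsWinOn G S c r) {d : κ → V} (hd : d ∘ e = c) : CopsWinOn G S d r := by
  induction h generalizing d with
  | caught i hi => exact caught (e i) (by rwa [← Function.comp_apply (f := d), hd])
  | step c' hc _ ih =>
    subst hd
    refine step (Function.extend e c' d) (fun i => ?_) fun r' hr' hrr' =>
      ih r' hr' hrr' (Function.extend_comp he c' d)
    by_cases hi : ∃ a, e a = i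
    · obtain ⟨a, rfl⟩ := hi
      rw [he.extend_apply]
      exact hc a
    · rw [Function.extend_apply' _ _ _ hi]
      exact Near.refl G _

theorem map (φ : G ↪g G') {T : Set V'} (hT : T ⊆ φ '' S) {c : ι → V} {r : V}
    (h : CopsWinOn G S c r) : CopsWinOn G' T (φ ∘ c) (φ r) := by
  induction h with
  | caught i hi => exact caught i ((near_map_iff φ).2 hi)
  | step c' hc _ ih =>
    refine step (φ ∘ c') (fun i => (near_map_iff φ).2 (hc i)) fun r' hr' hrr' => ?_
    obtain ⟨s, hs, rfl⟩ := hT hr'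
    exact ih s hs ((near_map_iff φ).1 hrr')

theorem of_fold {f : V → V} (hS : S' ⊆ S) (hf : Set.MapsTo f S S')
    (hnear : ∀ x ∈ S, ∀ y ∈ S, Near G x y → Near G (f x) y) {c : ι → V} {r : V} (hr : r ∈ S)
    (h : CopsWinOn G S' c (f r)) : CopsWinOn G S c r := by
  classical
  obtain ⟨s, hs⟩ : ∃ s, s = f r := ⟨_, rfl⟩
  rw [← hs] at h
  induction h generalizing r with
  | @caught c _ i hi =>
    subst hs
    -- Cop `i` moves onto `f r`, which dominates every possible next position of the robber.
    refine step (Function.update c i (f r)) (near_update hi) fun r' hr' hrr' => caught i ?_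
    rw [Function.update_self]
    exact hnear r hr r' hr' hrr'
  | step c' hc _ ih =>
    subst hs
    refine step c' hc fun r' hr' hrr' => ih (f r') (hf hr') ?_ hr' rfl
    have hfr : Near G r' (f r) := (hnear r hr r' hr' hrr').symm
    exact (hnear r' hr' (f r) (hS (hf hr)) hfr).symm

end CopsWinOn

end Game

section Dismantling

variable {V ι : Type*} {G : SimpleGraph V} {level : V → ℕ} {fold : V → V}

/-- A dismantling of `G` onto its vertices of level `0`: `fold` lowers every positive level, and
`fold x` dominates `x` in the subgraph induced on the vertices of level at most that of `x`.
A whole level is folded at once, hence the comparison with all `y` of the same level. -/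
structure IsDismantling (G : SimpleGraph V) (level : V → ℕ) (fold : V → V) : Prop where
  level_fold_lt : ∀ x, 0 < level x → level (fold x) < level x
  near_fold : ∀ x y, 0 < level x → level y ≤ level x → Near G x y → Near G (fold x) y

theorem IsDismantling.copsWinOn (hG : IsDismantling G level fold) {c : ι → V}
    (h₀ : ∀ r, level r ≤ 0 → CopsWinOn G {v | level v ≤ 0} c r) (t : ℕ) :
    ∀ r, level r ≤ t → CopsWinOn G {v | level v ≤ t} c r := by
  induction t with
  | zero => exact h₀
  | succ t ih =>
    intro r hr
    let foldTop (x : V) : V := if level x ≤ t then x else fold x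
    have level_foldTop (x : V) (hx : level x ≤ t + 1) : level (foldTop x) ≤ t := by
      dsimp only [foldTop]
      split_ifs with hxt
      · exact hxt
      · have := hG.level_fold_lt x (by lia)
        lia
    have near_foldTop (x : V) (hx : level x ≤ t + 1) (y : V) (hy : level y ≤ t + 1)
        (hxy : Near G x y) : Near G (foldTop x) y := by
      dsimp only [foldTop]
      split_ifs with hxt
      · exact hxy
      · exact hG.near_fold x y (by lia) (by lia) hxy
    exact .of_fold (fun _ hx => Nat.le_succ_of_le hx) level_foldTop near_foldTop hr
      (ih _ (level_foldTop r hr))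

end Dismantling

section Strategies

variable {V W : Type*} {G : SimpleGraph V} {H : SimpleGraph W} {j k : ℕ}

theorem histUpTo_succ (c : ℕ → Fin k → V) (r : ℕ → V) (n : ℕ) :
    histUpTo c r (n + 1) = histUpTo c r n ++ [(c n, r n)] := by
  simp [histUpTo, List.range_succ]

theorem histUpTo_succ_eq_cons (c : ℕ → Fin k → V) (r : ℕ → V) (n : ℕ) :
    histUpTo c r (n + 1) =
      (c 0, r 0) :: histUpTo (fun i => c (i + 1)) (fun i => r (i + 1)) n := by
  simp [histUpTo, List.range_succ_eq_map]

theorem exists_play (mv : GameHist V k → Fin k → V) (escape : (Fin k → V) → (Fin k → V) → V → V)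
    (c₀ : Fin k → V) (r₀ : V) :
    ∃ (c : ℕ → Fin k → V) (r : ℕ → V), c 0 = c₀ ∧ r 0 = r₀ ∧ FollowsStrat mv c r ∧
      ∀ n, r (n + 1) = escape (c n) (c (n + 1)) (r n) := by
  -- The state of the recursion is the history strictly before a round, with the current round.
  let next (s : GameHist V k × (Fin k → V) × V) : GameHist V k × (Fin k → V) × V :=
    (s.1 ++ [s.2], mv (s.1 ++ [s.2]), escape s.2.1 (mv (s.1 ++ [s.2])) s.2.2)
  let state (n : ℕ) : GameHist V k × (Fin k → V) × V := next^[n] ([], c₀, r₀)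
  have state_succ (n : ℕ) : state (n + 1) = next (state n) := Function.iterate_succ_apply' ..
  let c (n : ℕ) : Fin k → V := (state n).2.1
  let r (n : ℕ) : V := (state n).2.2
  have hist_eq (n : ℕ) : histUpTo c r n = (state n).1 := by
    induction n with
    | zero => rfl
    | succ n ih => rw [histUpTo_succ, ih, state_succ]
  refine ⟨c, r, rfl, rfl, fun n => ?_, fun n => ?_⟩
  · rw [hist_eq, state_succ n]
    exact congrArg (·.2.1) (state_succ n)
  · change (state (n + 1)).2.2 = escape _ (state (n + 1)).2.1 _
    rw [state_succ]

theorem CopsCatchFrom.copsWinOn {c₀ : Fin k → V} (h : CopsCatchFrom G c₀) (r₀ : V) :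
    CopsWinOn G Set.univ c₀ r₀ := by
  by_contra hr₀
  obtain ⟨mv, hmv⟩ := h
  have exists_escape (c c' : Fin k → V) (r : V) : ∃ r', Near G r r' ∧
      (¬ CopsWinOn G Set.univ c r → (∀ i, Near G (c i) (c' i)) →
        ¬ CopsWinOn G Set.univ c' r') := by
    by_contra! hcon
    obtain ⟨hc, hcc', -⟩ := hcon r (Near.refl G r)
    exact hc (.step c' hcc' fun r' _ hrr' => (hcon r' hrr').2.2)
  choose escape near_escape not_win_escape using exists_escape
  obtain ⟨c, r, rfl, rfl, hplay, hr⟩ := exists_play mv escape c₀ r₀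
  have not_win (n : ℕ) (hlegal : ∀ t < n, CopStepLegal G c t) :
      ¬ CopsWinOn G Set.univ (c n) (r n) := by
    induction n with
    | zero => exact hr₀
    | succ n ih =>
      rw [hr]
      exact not_win_escape _ _ _ (ih fun t ht => hlegal t (by lia)) (hlegal n n.lt_succ_self)
  have robber_legal : RobberLegal G r := fun n => by
    rw [hr]
    exact near_escape _ _ _
  obtain ⟨n, ⟨⟨i, hi⟩, hlegal⟩ | ⟨⟨i, hi⟩, hlegal⟩⟩ := hmv c r rfl hplay robber_legal
  · exact not_win n hlegal (.caught i (.inl hi.symm))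
  · exact not_win n (fun t ht => hlegal t ht.le) (.caught i (hi ▸ hlegal n le_rfl i))

/-- In the play `(c, r)` some cop catches the robber, at the end of a round or by the cops' move,
and the cops' moves are legal up to that point. -/
def PlayCaught (G : SimpleGraph V) (c : ℕ → Fin k → V) (r : ℕ → V) : Prop :=
  ∃ n, ((∃ i, c n i = r n) ∧ ∀ m < n, CopStepLegal G c m) ∨
    ((∃ i, c (n + 1) i = r n) ∧ ∀ m ≤ n, CopStepLegal G c m)

theorem PlayCaught.of_tail {c : ℕ → Fin k → V} {r : ℕ → V} (h₀ : CopStepLegal G c 0)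
    (h : PlayCaught G (fun n => c (n + 1)) fun n => r (n + 1)) : PlayCaught G c r := by
  obtain ⟨n, ⟨hcatch, hlegal⟩ | ⟨hcatch, hlegal⟩⟩ := h
  · refine ⟨n + 1, .inl ⟨hcatch, ?_⟩⟩
    rintro (_ | m) hm
    exacts [h₀, hlegal m (by lia)]
  · refine ⟨n + 1, .inr ⟨hcatch, ?_⟩⟩
    rintro (_ | m) hm
    exacts [h₀, hlegal m (by lia)]

theorem CopsWinOn.exists_strategy {c₀ : Fin k → V} {r₀ : V} (h : CopsWinOn G Set.univ c₀ r₀) :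
    ∃ mv : GameHist V k → Fin k → V, ∀ (c : ℕ → Fin k → V) (r : ℕ → V),
      c 0 = c₀ → r 0 = r₀ → FollowsStrat mv c r → RobberLegal G r → PlayCaught G c r := by
  have : Nonempty V := ⟨r₀⟩
  induction h with
  | @caught c₀ r₀ i hi =>
    refine ⟨fun _ => Function.update c₀ i r₀, ?_⟩
    rintro c r rfl rfl hplay -
    have hc₁ : c 1 = Function.update (c 0) i (r 0) := hplay 0
    refine ⟨0, .inr ⟨⟨i, by rw [hc₁, Function.update_self]⟩, fun m hm j => ?_⟩⟩
    obtain rfl := Nat.le_zero.1 hm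
    rw [hc₁]
    exact near_update hi j
  | step c' hc _ ih =>
    choose! σ hσ using ih
    refine ⟨fun
      | _ :: p :: hist => σ p.2 (p :: hist)
      | _ => c', ?_⟩
    rintro c r rfl rfl hplay hrob
    have hc₁ : c 1 = c' := hplay 0
    refine .of_tail (fun i => by rw [hc₁]; exact hc i) (hσ (r 1) trivial (hrob 0) _ _ hc₁ rfl
      (fun n => ?_) fun n => hrob (n + 1))
    rw [hplay (n + 1), histUpTo_succ_eq_cons, histUpTo_succ_eq_cons]

theorem copsCatchFrom_iff {c₀ : Fin k → V} :
    CopsCatchFrom G c₀ ↔ ∀ r, CopsWinOn G Set.univ c₀ r := by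
  refine ⟨CopsCatchFrom.copsWinOn, fun h => ?_⟩
  choose σ hσ using fun r => (h r).exists_strategy
  refine ⟨fun
    | [] => c₀
    | p :: hist => σ p.2 (p :: hist), fun c r hc hplay hrob => hσ (r 0) c r hc rfl ?_ hrob⟩
  intro n
  rw [hplay n, histUpTo_succ_eq_cons]

theorem CopsWinWith.mono [Nonempty V] (h : CopsWinWith G j) (hjk : j ≤ k) : CopsWinWith G k := by
  obtain ⟨c, hc⟩ := h
  have hinj : Function.Injective (Fin.castLE hjk) := Fin.castLE_injective hjk
  refine ⟨Function.extend (Fin.castLE hjk) c fun _ => Classical.arbitrary V,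
    copsCatchFrom_iff.2 fun r => ?_⟩
  exact (hc.copsWinOn r).extend_cops hinj (Function.extend_comp hinj c _)

theorem copsWinWith_natCard (G : SimpleGraph V) [Finite V] : CopsWinWith G (Nat.card V) := by
  refine ⟨(Finite.equivFin V).symm, copsCatchFrom_iff.2 fun r => .caught (Finite.equivFin V r) ?_⟩
  rw [Equiv.symm_apply_apply]
  exact Near.refl G r

theorem copsWinWith_of_copNumber_le [Finite V] [Nonempty V] (h : copNumber G ≤ k) :
    CopsWinWith G k :=
  have hmin : CopsWinWith G (copNumber G) :=
    Nat.sInf_mem (s := {k | CopsWinWith G k}) ⟨_, copsWinWith_natCard G⟩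
  hmin.mono h

theorem CopsWinWith.of_isDismantling {level : V → ℕ} {fold : V → V} {N : ℕ} (φ : H ↪g G)
    (hG : IsDismantling G level fold) (hN : ∀ x, level x ≤ N)
    (hφ : ∀ x, level x = 0 → x ∈ Set.range φ) (h : CopsWinWith H k) : CopsWinWith G k := by
  obtain ⟨c, hc⟩ := h
  have h₀ (r : V) (hr : level r ≤ 0) : CopsWinOn G {v | level v ≤ 0} (φ ∘ c) r := by
    obtain ⟨s, rfl⟩ := hφ r (Nat.le_zero.1 hr)
    refine (hc.copsWinOn s).map φ fun x hx => ?_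
    rw [Set.image_univ]
    exact hφ x (Nat.le_zero.1 hx)
  refine ⟨φ ∘ c, copsCatchFrom_iff.2 fun r => ?_⟩
  have hr := hG.copsWinOn h₀ N r (hN r)
  rwa [Set.eq_univ_of_forall (s := {v | level v ≤ N}) hN] at hr

end Strategies

section Arm

variable {n : ℕ}

theorem fin5adj_iff (i j : Fin 5) : fin5adj i j ↔ (cycleGraph 5).Adj i j := by
  unfold fin5adj
  decide +revert

theorem near_armGraph {a b : ArmVert n} :
    Near (armGraph n) a b ↔ b = a ∨ armRel n a b ∨ armRel n b a :=
  near_fromRel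

theorem near_inner_inner {x y : Fin n} {i j : Fin 5} :
    Near (armGraph n) (.inner x i) (.inner y j) ↔ y = x ∧ Near (cycleGraph 5) i j := by
  rw [near_armGraph]
  simp only [armRel, fin5adj_iff, ArmVert.inner.injEq, Near, adj_comm _ j i]
  grind

theorem near_inner_outer {x y : Fin n} {i j : Fin 5} :
    Near (armGraph n) (.inner x i) (.outer y j) ↔ y = x ∧ Near (cycleGraph 5) i j := by
  rw [near_armGraph]
  simp only [armRel, fin5adj_iff, reduceCtorEq, Near]
  grind

theorem near_outer_inner {x y : Fin n} {i j : Fin 5} :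
    Near (armGraph n) (.outer x i) (.inner y j) ↔ y = x ∧ Near (cycleGraph 5) i j := by
  rw [near_comm, near_inner_outer, near_comm, eq_comm]

theorem near_outer_outer {x y : Fin n} {i j : Fin 5} :
    Near (armGraph n) (.outer x i) (.outer y j) ↔ (y = x ∧ Near (cycleGraph 5) i j) ∨
      ((x : ℕ) + 1 = y ∧ i = 2 ∧ j = 0) ∨ ((y : ℕ) + 1 = x ∧ j = 2 ∧ i = 0) := by
  rw [near_armGraph]
  simp only [armRel, fin5adj_iff, ArmVert.outer.injEq, Near, adj_comm _ j i]
  grind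

theorem near_inner_center {x y : Fin n} {i : Fin 5} :
    Near (armGraph n) (.inner x i) (.center y) ↔ y = x := by
  rw [near_armGraph]
  simp only [armRel, reduceCtorEq]
  grind

theorem near_center_inner {x y : Fin n} {j : Fin 5} :
    Near (armGraph n) (.center x) (.inner y j) ↔ y = x := by
  rw [near_comm, near_inner_center, eq_comm]

/-- The layer in which a vertex of the arm is folded away: the copy `T_x` takes up the levels
`5x + 1` to `5x + 5`, starting from the vertex `b₀ˣ` that joins it to the earlier copies. -/
def armLevel : ArmVert n → ℕ
  | .start => 0
  | .finish => 5 * n + 1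
  | .center x => 5 * x + 3
  | .inner x i => 5 * x + ![2, 3, 4, 4, 3] i
  | .outer x i => if i = 0 then 5 * x + 1 else 5 * x + 5

/-- The vertex dominating a given vertex of the arm once all higher layers are gone.  In `T_x`,
each `b_i` with `i ≠ 0` goes to `a_i`, then `a₂` and `a₃` go to the center, the center, `a₁` and
`a₄` go to `a₀`, and `a₀` goes to `b₀`, which goes to the previous copy. -/
def armFold : ArmVert n → ArmVert n
  | .start => .start
  | .finish => b2prev n n
  | .center x => .inner x 0
  | .inner x i => ![.outer x 0, .inner x 0, .center x, .center x, .inner x 0] i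
  | .outer x i => if i = 0 then b2prev n x else .inner x i

theorem armLevel_pos {a : ArmVert n} (ha : a ≠ .start) : 0 < armLevel a := by
  cases a with
  | start => exact absurd rfl ha
  | inner x i => fin_cases i <;> simp [armLevel]
  | _ => grind [armLevel]

theorem armLevel_le (a : ArmVert n) : armLevel a ≤ 5 * n + 1 := by
  cases a with
  | inner x i => fin_cases i <;> simp [armLevel] <;> lia
  | _ => grind [armLevel]

theorem armLevel_b2prev_le (n x : ℕ) : armLevel (b2prev n x) ≤ 5 * x := by
  grind [armLevel, b2prev]

theorem near_b2prev_b0 {x : ℕ} (hx : x ≤ n) : Near (armGraph n) (b2prev n x) (b0 n x) := by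
  rw [near_armGraph]
  grind [armRel, b2prev, b0]

theorem lt_armLevel_inner (x : Fin n) (i : Fin 5) : 5 * x + 1 < armLevel (.inner x i) := by
  fin_cases i <;> simp [armLevel]

theorem eq_b0_or_eq_b2prev_of_near {x : ℕ} (hx : x ≤ n) {a : ArmVert n}
    (ha : armLevel a ≤ 5 * x + 1) (h : Near (armGraph n) (b0 n x) a) :
    a = b0 n x ∨ a = b2prev n x := by
  rw [near_armGraph] at h
  cases a with
  | inner y j => grind [lt_armLevel_inner, armRel, b0]
  | _ => grind [armLevel, armRel, b2prev, b0]

theorem near_b2prev {x : ℕ} (hx : x ≤ n) {a : ArmVert n}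
    (ha : armLevel a ≤ 5 * x + 1) (h : Near (armGraph n) (b0 n x) a) :
    Near (armGraph n) (b2prev n x) a := by
  rcases eq_b0_or_eq_b2prev_of_near hx ha h with rfl | rfl
  exacts [near_b2prev_b0 hx, Near.refl _ _]

theorem near_zero_of_armLevel_inner_le {x : Fin n} {i : Fin 5}
    (hi : armLevel (.inner x i) ≤ 5 * x + 3) : Near (cycleGraph 5) 0 i := by
  have hi' : ![2, 3, 4, 4, 3] i ≤ 3 := by simpa only [armLevel, add_le_add_iff_left] using hi
  clear hi
  decide +revert

theorem eq_zero_of_armLevel_outer_le {x : Fin n} {i j : Fin 5}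
    (h : armLevel (.outer x j) ≤ armLevel (.inner x i)) : j = 0 := by
  by_contra hj
  fin_cases i <;> simp [armLevel, hj] at h

theorem near_armFold_inner {x : Fin n} {i : Fin 5} {b : ArmVert n}
    (hb : armLevel b ≤ armLevel (.inner x i)) (h : Near (armGraph n) (.inner x i) b) :
    Near (armGraph n) (armFold (.inner x i)) b := by
  cases b with
  | inner y j =>
    obtain ⟨rfl, hij⟩ := near_inner_inner.1 h
    fin_cases i
    · exact near_outer_inner.2 ⟨rfl, hij⟩
    · exact near_inner_inner.2 ⟨rfl, near_zero_of_armLevel_inner_le hb⟩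
    · exact near_center_inner.2 rfl
    · exact near_center_inner.2 rfl
    · exact near_inner_inner.2 ⟨rfl, near_zero_of_armLevel_inner_le hb⟩
  | outer y j =>
    obtain ⟨rfl, hij⟩ := near_inner_outer.1 h
    obtain rfl := eq_zero_of_armLevel_outer_le hb
    fin_cases i
    · exact Near.refl _ _
    · exact near_inner_outer.2 ⟨rfl, Near.refl _ _⟩
    · exact absurd hij (by decide)
    · exact absurd hij (by decide)
    · exact near_inner_outer.2 ⟨rfl, Near.refl _ _⟩
  | center y =>
    obtain rfl := near_inner_center.1 h
    fin_cases i
    · exact absurd hb (by simp [armLevel])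
    · exact near_inner_center.2 rfl
    · exact Near.refl _ _
    · exact Near.refl _ _
    · exact near_inner_center.2 rfl
  | _ =>
    rw [near_armGraph] at h
    simp [armRel] at h

theorem near_armFold_outer {x : Fin n} {i : Fin 5} (hi : i ≠ 0) {b : ArmVert n}
    (hb : armLevel b ≤ armLevel (.outer x i)) (h : Near (armGraph n) (.outer x i) b) :
    Near (armGraph n) (armFold (.outer x i)) b := by
  simp only [armFold, if_neg hi]
  cases b with
  | inner y j =>
    obtain ⟨rfl, hij⟩ := near_outer_inner.1 h
    exact near_inner_inner.2 ⟨rfl, hij⟩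
  | outer y j =>
    rcases near_outer_outer.1 h with ⟨rfl, hij⟩ | ⟨hxy, -, rfl⟩ | ⟨-, -, rfl⟩
    · exact near_inner_outer.2 ⟨rfl, hij⟩
    · simp [armLevel, hi] at hb
      lia
    · contradiction
  | center y =>
    rw [near_armGraph] at h
    simp [armRel] at h
  | _ =>
    rw [near_armGraph] at h
    grind [armRel, armLevel]

theorem near_armFold_center {x : Fin n} {b : ArmVert n}
    (hb : armLevel b ≤ armLevel (.center x)) (h : Near (armGraph n) (.center x) b) :
    Near (armGraph n) (armFold (.center x)) b := by
  cases b with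
  | inner y j =>
    obtain rfl := near_center_inner.1 h
    exact near_inner_inner.2 ⟨rfl, near_zero_of_armLevel_inner_le hb⟩
  | center y =>
    rw [near_armGraph] at h
    grind [armRel, near_inner_center, armFold]
  | _ =>
    rw [near_armGraph] at h
    simp [armRel] at h

theorem armLevel_armFold_lt {a : ArmVert n} (ha : a ≠ .start) :
    armLevel (armFold a) < armLevel a := by
  cases a with
  | start => contradiction
  | finish => exact Nat.lt_succ_of_le (armLevel_b2prev_le n n)
  | inner x i => fin_cases i <;> simp [armLevel, armFold]
  | outer x i =>
    by_cases hi : i = 0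
    · simpa [armLevel, armFold, hi] using Nat.lt_succ_of_le (armLevel_b2prev_le n x)
    · fin_cases i <;> simp [armLevel, armFold] at hi ⊢
  | center x => simp [armLevel, armFold]

theorem isDismantling_armGraph (n : ℕ) : IsDismantling (armGraph n) armLevel armFold where
  level_fold_lt a ha := armLevel_armFold_lt (by rintro rfl; exact ha.ne rfl)
  near_fold a b ha hb hab := by
    cases a with
    | start => exact hab
    | finish =>
      have hn : b0 n n = .finish := by simp [b0]
      exact near_b2prev le_rfl hb (hn ▸ hab)
    | inner x i => exact near_armFold_inner hb hab
    | outer x i =>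
      by_cases hi : i = 0
      · subst hi
        have hx : b0 n x = .outer x 0 := by simp [b0]
        exact near_b2prev x.is_lt.le hb (hx ▸ hab)
      · exact near_armFold_outer hi hb hab
    | center x => exact near_armFold_center hb hab

end Arm

section ZGraph

variable {W : Type*} {H : SimpleGraph W} {m p : ℕ}

/-- The graph `Z_{k,m}(H)` with an arbitrary length `p` of the paths and arms: `ZGraph H k m` is
definitionally the case `p = 4 * (m - k)`. -/
def zGraphOfLength (H : SimpleGraph W) (m p : ℕ) : SimpleGraph (ZVert W m p) :=
  SimpleGraph.fromRel (zRel H m p)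

theorem near_zGraphOfLength {x y : ZVert W m p} :
    Near (zGraphOfLength H m p) x y ↔ y = x ∨ zRel H m p x y ∨ zRel H m p y x :=
  near_fromRel

theorem near_arm_arm {w w' : W} {i i' : Fin m} {a a' : ArmVert p} :
    Near (zGraphOfLength H m p) (.inr (.inr (w, i, a))) (.inr (.inr (w', i', a'))) ↔
      w' = w ∧ i' = i ∧ Near (armGraph p) a a' := by
  rw [near_zGraphOfLength]
  simp only [zRel, Near, adj_comm _ a' a, Sum.inr.injEq, Prod.mk.injEq]
  grind

/-- The base graph `H` inside `Z_{k,m}(H)`. -/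
def zGraphOfLengthEmbedding (H : SimpleGraph W) (m p : ℕ) : H ↪g zGraphOfLength H m p where
  toFun := Sum.inl
  inj' := Sum.inl_injective
  map_rel_iff' {w w'} := by
    simp only [Function.Embedding.coeFn_mk, zGraphOfLength, fromRel_adj, zRel, adj_comm _ w' w,
      or_self, ne_eq, Sum.inl.injEq, and_iff_right_iff_imp]
    exact Adj.ne

/-- The layer in which a vertex of `Z_{k,m}(H)` is folded away, `0` on `H` itself. -/
def zLevel : ZVert W m p → ℕ
  | .inl _ => 0
  | .inr (.inl (_, j)) => j + 1
  | .inr (.inr (_, _, a)) => armLevel a + 1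

/-- The vertex dominating a given vertex of `Z_{k,m}(H)` once all higher layers are gone: paths
are shortened from their far end and arms are folded by `armFold`, until only `H` remains. -/
def zFold : ZVert W m p → ZVert W m p
  | .inl w => .inl w
  | .inr (.inl (w, j)) =>
    if (j : ℕ) = 0 then .inl w else .inr (.inl (w, ⟨j - 1, by lia⟩))
  | .inr (.inr (w, i, a)) => if a = .start then .inl w else .inr (.inr (w, i, armFold a))

theorem zLevel_le (x : ZVert W m p) : zLevel x ≤ 5 * p + 2 := by
  rcases x with _ | ⟨_, j⟩ | ⟨_, _, a⟩
  · exact Nat.zero_le _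
  · dsimp only [zLevel]
    lia
  · exact Nat.succ_le_succ (armLevel_le a)

theorem zLevel_zFold_lt {x : ZVert W m p} (hx : 0 < zLevel x) : zLevel (zFold x) < zLevel x := by
  rcases x with w | ⟨w, j⟩ | ⟨w, i, a⟩
  · exact absurd hx (lt_irrefl _)
  · grind [zLevel, zFold]
  · by_cases ha : a = .start
    · simp [zLevel, zFold, ha]
    · simpa [zLevel, zFold, ha] using armLevel_armFold_lt ha

theorem near_zFold_path {w : W} {j : Fin p} {y : ZVert W m p}
    (hy : zLevel y ≤ zLevel (.inr (.inl (w, j)) : ZVert W m p))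
    (h : Near (zGraphOfLength H m p) (.inr (.inl (w, j))) y) :
    Near (zGraphOfLength H m p) (zFold (.inr (.inl (w, j)))) y := by
  rw [near_zGraphOfLength] at h ⊢
  rcases y with w' | ⟨w', j'⟩ | ⟨w', i, a⟩
  · grind [zRel, zFold]
  · grind [zRel, zFold, zLevel]
  · simp [zRel] at h

theorem near_zFold_arm {w : W} {i : Fin m} {a : ArmVert p} {y : ZVert W m p}
    (hy : zLevel y ≤ zLevel (.inr (.inr (w, i, a)) : ZVert W m p))
    (h : Near (zGraphOfLength H m p) (.inr (.inr (w, i, a))) y) :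
    Near (zGraphOfLength H m p) (zFold (.inr (.inr (w, i, a)))) y := by
  rcases y with w' | ⟨w', j⟩ | ⟨w', i', a'⟩
  · rw [near_zGraphOfLength] at h
    obtain ⟨rfl, rfl⟩ : w' = w ∧ a = .start := by simpa [zRel] using h
    exact Near.refl _ _
  · rw [near_zGraphOfLength] at h
    simp [zRel] at h
  · obtain ⟨rfl, rfl, ha⟩ := near_arm_arm.1 h
    have ha' : armLevel a' ≤ armLevel a := Nat.le_of_succ_le_succ hy
    by_cases hstart : a = .start
    · subst hstart
      obtain rfl : a' = .start := by
        by_contra hne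
        exact (armLevel_pos hne).not_ge ha'
      rw [near_zGraphOfLength]
      simp [zRel, zFold]
    · rw [zFold, if_neg hstart, near_arm_arm]
      exact ⟨rfl, rfl, (isDismantling_armGraph p).near_fold a a' (armLevel_pos hstart) ha' ha⟩

theorem isDismantling_zGraphOfLength (H : SimpleGraph W) (m p : ℕ) :
    IsDismantling (zGraphOfLength H m p) zLevel zFold where
  level_fold_lt _ hx := zLevel_zFold_lt hx
  near_fold x y hx hy hxy := by
    rcases x with w | ⟨w, j⟩ | ⟨w, i, a⟩
    exacts [absurd hx (lt_irrefl _), near_zFold_path hy hxy, near_zFold_arm hy hxy]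

theorem mem_range_zGraphOfLengthEmbedding {x : ZVert W m p} (hx : zLevel x = 0) :
    x ∈ Set.range (zGraphOfLengthEmbedding H m p) := by
  rcases x with w | ⟨w, j⟩ | ⟨w, i, a⟩
  exacts [⟨w, rfl⟩, absurd hx (Nat.succ_ne_zero _), absurd hx (Nat.succ_ne_zero _)]

theorem ZGraph_cop_number_le_general {k : ℕ} (hH : CopsWinWith H k) (m p : ℕ) :
    CopsWinWith (zGraphOfLength H m p) k ∧ copNumber (zGraphOfLength H m p) ≤ k := by
  have hZ : CopsWinWith (zGraphOfLength H m p) k :=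
    .of_isDismantling (zGraphOfLengthEmbedding H m p) (isDismantling_zGraphOfLength H m p)
      zLevel_le (fun _ => mem_range_zGraphOfLengthEmbedding) hH
  exact ⟨hZ, Nat.sInf_le hZ⟩

end ZGraph

/-- Let `m ≥ k ≥ 1` and let `H` be a finite connected graph with `c(H) ≤ k`.  Then
`k` cops have a winning strategy on `Z_{k,m}(H)`, so `c(Z_{k,m}(H)) ≤ k`. -/
theorem ZGraph_cop_number_le {W : Type*} [Fintype W] (H : SimpleGraph W)
    (hH : H.Connected) (k m : ℕ) (hk : 1 ≤ k) (hkm : k ≤ m)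
    (hcop : copNumber H ≤ k) :
    CopsWinWith (ZGraph H k m) k ∧ copNumber (ZGraph H k m) ≤ k := by
  have := hH.nonempty
  exact ZGraph_cop_number_le_general (copsWinWith_of_copNumber_le hcop) m _
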